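/- Let H be a finite-dimensional semisimple Hopf algebra over a field of characteristic zero with Haar integral ℓ. The invariants of the right coadjoint action of H on H*, defined by α ◁*_ad h = ⟨α₍₁₎ S(α₍₃₎), h⟩ α₍₂₎, are exactly the character algebra C(H) = {α ∈ H* : Δ(α) = Δ^op(α)}, and the map π_ad: H* → H*, α ↦ α ◁*_ad ℓ is a projector onto C(H). -/

import Mathlib

open TensorProduct LinearMap

noncomputable section

variable (F H : Type*) [Field F] [Ring H] [HopfAlgebra F H]

/-- The left adjoint action of `H` on itself, `adL h : k ↦ h₍₁₎ * k * S(h₍₂₎)`, packaged as a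
linear map `H →ₗ[F] End(H)`. -/
def adL : H →ₗ[F] Module.End F H :=
  (TensorProduct.lift ((LinearMap.llcomp F H H H).compl₁₂ (LinearMap.mul F H)
      ((LinearMap.mul F H).flip ∘ₗ HopfAlgebra.antipode (R := F)))) ∘ₗ
    Coalgebra.comul (R := F)

/-- The right coadjoint action of `H` on `H*`:
`(α ◁*_ad h)(k) = α(h₍₁₎ * k * S(h₍₂₎))`, i.e. `α ◁*_ad h = ⟨α₍₁₎ S(α₍₃₎), h⟩ α₍₂₎`. -/
def rcoad (α : Module.Dual F H) (h : H) : Module.Dual F H :=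
  α ∘ₗ adL F H h


namespace LR
open Coalgebra HopfAlgebra
noncomputable section

set_option linter.unusedSectionVars false

variable {K A : Type*} [Field K] [Ring A] [HopfAlgebra K A]
variable {M N : Type*} [AddCommGroup M] [Module K M] [AddCommGroup N] [Module K N]

local notation "S" => antipode K (A := A)
local notation "ε" => Coalgebra.counit (R := K) (A := A)

variable (K) in
/-- bilinear function on `A`. -/
def IsBil (B : A → A → M) : Prop := ∃ L : A ⊗[K] A →ₗ[K] M, ∀ x y, L (x ⊗ₜ y) = B x y

variable (K) in
/-- trilinear function on `A`. -/
def IsTri (T : A → A → A → M) : Prop :=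
  ∃ L : A ⊗[K] (A ⊗[K] A) →ₗ[K] M, ∀ x y z, L (x ⊗ₜ (y ⊗ₜ z)) = T x y z

theorem IsBil.mk {B : A → A → M}
    (a1 : ∀ x x' y, B (x + x') y = B x y + B x' y)
    (s1 : ∀ (c : K) x y, B (c • x) y = c • B x y)
    (a2 : ∀ x y y', B x (y + y') = B x y + B x y')
    (s2 : ∀ (c : K) x y, B x (c • y) = c • B x y) : IsBil K B :=
  ⟨lift (LinearMap.mk₂ K B a1 s1 a2 s2), fun x y => by simp⟩

theorem IsTri.mk {T : A → A → A → M}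
    (a1 : ∀ x x' y z, T (x + x') y z = T x y z + T x' y z)
    (s1 : ∀ (c : K) x y z, T (c • x) y z = c • T x y z)
    (a2 : ∀ x y y' z, T x (y + y') z = T x y z + T x y' z)
    (s2 : ∀ (c : K) x y z, T x (c • y) z = c • T x y z)
    (a3 : ∀ x y z z', T x y (z + z') = T x y z + T x y z')
    (s3 : ∀ (c : K) x y z, T x y (c • z) = c • T x y z) : IsTri K T :=
  ⟨lift (LinearMap.mk₂ K (fun x w => lift (LinearMap.mk₂ K (T x) (a2 x) (fun c => s2 c x)
      (a3 x) (fun c => s3 c x)) w)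
    (fun x x' w => by
      induction w using TensorProduct.induction_on with
      | zero => simp
      | tmul y z => simp [a1]
      | add u v hu hv => rw [map_add, hu, hv, map_add, map_add]; abel)
    (fun c x w => by
      induction w using TensorProduct.induction_on with
      | zero => simp
      | tmul y z => simp [s1]
      | add u v hu hv => rw [map_add, hu, hv, map_add, smul_add])
    (fun x w w' => by simp) (fun c x w => by simp)), fun x y z => by simp⟩

variable (K) in
/-- Sweedler sum. -/
def sw (h : A) (B : A → A → M) : M :=
  ∑ i ∈ (ℛ K h).index, B ((ℛ K h).left i) ((ℛ K h).right i)

theorem sw_lin (L : A ⊗[K] A →ₗ[K] M) (h : A) :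
    sw K h (fun x y => L (x ⊗ₜ y)) = L (comul h) := by
  rw [← (ℛ K h).eq, map_sum]; rfl

theorem sw_tmul (h : A) : sw K h (fun x y => x ⊗ₜ[K] y) = comul h := (ℛ K h).eq

theorem map_sw (f : M →ₗ[K] N) (h : A) (B : A → A → M) :
    f (sw K h B) = sw K h (fun x y => f (B x y)) := by simp [sw, map_sum]

theorem mul_sw (a h : A) (B : A → A → A) :
    a * (sw K h B) = sw K h (fun x y => a * (B x y)) := by simp [sw, Finset.mul_sum]

theorem sw_mul_right (a h : A) (B : A → A → A) :
    (sw K h B) * a = sw K h (fun x y => (B x y) * a) := by simp [sw, Finset.sum_mul]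

theorem mul_sw' {R : Type*} [Ring R] (a : R) (h : A) (B : A → A → R) :
    a * (sw K h B) = sw K h (fun x y => a * (B x y)) := by simp [sw, Finset.mul_sum]

theorem sw_mul_right' {R : Type*} [Ring R] (a : R) (h : A) (B : A → A → R) :
    (sw K h B) * a = sw K h (fun x y => (B x y) * a) := by simp [sw, Finset.sum_mul]

theorem smul_sw (c : K) (h : A) (B : A → A → M) :
    c • (sw K h B) = sw K h (fun x y => c • (B x y)) := by simp [sw, Finset.smul_sum]

theorem sw_smul_right (h : A) (B : A → A → K) (m : M) :
    (sw K h B) • m = sw K h (fun x y => B x y • m) := by simp [sw, Finset.sum_smul]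

theorem sw_finsum {ι : Type*} (s : Finset ι) (h : A) (B : ι → A → A → M) :
    ∑ i ∈ s, sw K h (B i) = sw K h (fun x y => ∑ i ∈ s, B i x y) := by
  simp only [sw]; rw [Finset.sum_comm]

theorem sw_comm (a b : A) (B : A → A → A → A → M) :
    sw K a (fun x y => sw K b (fun z w => B x y z w)) =
      sw K b (fun z w => sw K a (fun x y => B x y z w)) := by
  simp only [sw]; rw [Finset.sum_comm]

theorem sw_coassoc {T : A → A → A → M} (hT : IsTri K T) (h : A) :
    sw K h (fun x y => sw K x (fun x1 x2 => T x1 x2 y)) =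
      sw K h (fun x y => sw K y (fun y1 y2 => T x y1 y2)) := by
  obtain ⟨L, hL⟩ := hT
  have := congrArg L (sum_tmul_tmul_eq (ℛ K h) (fun i => ℛ K _) (fun i => ℛ K _))
  simpa [map_sum, hL, sw] using this

theorem sw_ext {B : A → A → M} (hB : IsBil K B) {h : A} {ι : Type*} (s : Finset ι) (l r : ι → A)
    (e : comul h = ∑ i ∈ s, l i ⊗ₜ[K] r i) : sw K h B = ∑ i ∈ s, B (l i) (r i) := by
  obtain ⟨L, hL⟩ := hB
  have : sw K h B = sw K h (fun x y => L (x ⊗ₜ y)) := by simp [hL]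
  rw [this, sw_lin, e, map_sum]; simp [hL]

theorem sw_mul {B : A → A → M} (hB : IsBil K B) (a b : A) :
    sw K (a * b) B = sw K a (fun x y => sw K b (fun x' y' => B (x * x') (y * y'))) := by
  obtain ⟨L, hL⟩ := hB
  have : sw K (a * b) B = sw K (a * b) (fun x y => L (x ⊗ₜ y)) := by simp [hL]
  rw [this, sw_lin, Bialgebra.comul_mul, ← sw_tmul (K := K) a, ← sw_tmul (K := K) b]
  simp only [sw, Finset.sum_mul_sum, map_sum]
  simp [hL]

theorem sw_counit_left (f : A →ₗ[K] M) (h : A) : sw K h (fun x y => ε x • f y) = f h := by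
  conv_rhs => rw [← sum_counit_smul (ℛ K h)]
  simp [sw]

theorem sw_counit_right (f : A →ₗ[K] M) (h : A) : sw K h (fun x y => ε y • f x) = f h := by
  have := congrArg (TensorProduct.lift ((LinearMap.lsmul K M).flip ∘ₗ f))
    (sum_tmul_counit_eq (R := K) (ℛ K h))
  simp only [map_sum, lift.tmul, comp_apply, flip_apply, lsmul_apply, one_smul] at this
  exact this

theorem sw_mul_antipode (h : A) : sw K h (fun x y => x * S y) = ε h • 1 :=
  sum_mul_antipode_eq_smul (ℛ K h)

theorem sw_antipode_mul (h : A) : sw K h (fun x y => S x * y) = ε h • 1 :=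
  sum_antipode_mul_eq_smul (ℛ K h)

theorem S_mul (a b : A) : S (a * b) = S b * S a := antipode_mul_antidistrib a b

/-- x₁ S(x₂) ⊗ x₃ = 1 ⊗ x -/
theorem I4 (f : A →ₗ[K] A →ₗ[K] M) (h : A) :
    sw K h (fun x y => sw K y (fun y1 y2 => f (x * S y1) y2)) = f 1 h := by
  rw [← sw_coassoc (T := fun x y1 y2 => f (x * S y1) y2)]
  · have : ∀ x y, sw K x (fun x1 x2 => f (x1 * S x2) y) = ε x • f 1 y := by
      intro x y
      have := map_sw (f.flip y) x (fun x1 x2 => x1 * S x2)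
      simp only [flip_apply] at this
      rw [← this, sw_mul_antipode]; simp
    simp only [this]
    exact sw_counit_left (f 1) h
  · apply IsTri.mk <;> intros <;> simp [add_mul, mul_add]

/-- S(x₁) x₂ ⊗ x₃ = 1 ⊗ x -/
theorem I4' (f : A →ₗ[K] A →ₗ[K] M) (h : A) :
    sw K h (fun x y => sw K y (fun y1 y2 => f (S x * y1) y2)) = f 1 h := by
  rw [← sw_coassoc (T := fun x y1 y2 => f (S x * y1) y2)]
  · have : ∀ x y, sw K x (fun x1 x2 => f (S x1 * x2) y) = ε x • f 1 y := by
      intro x y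
      have := map_sw (f.flip y) x (fun x1 x2 => S x1 * x2)
      simp only [flip_apply] at this
      rw [← this, sw_antipode_mul]; simp
    simp only [this]
    exact sw_counit_left (f 1) h
  · apply IsTri.mk <;> intros <;> simp [add_mul, mul_add]

/-- x₁ ⊗ x₂ S(x₃)  = x ⊗ 1 -/
theorem I5 (f : A →ₗ[K] A →ₗ[K] M) (h : A) :
    sw K h (fun x y => sw K x (fun x1 x2 => f x1 (x2 * S y))) = f h 1 := by
  rw [sw_coassoc (T := fun x1 x2 y => f x1 (x2 * S y))]
  · have : ∀ x y, sw K y (fun y1 y2 => f x (y1 * S y2)) = ε y • f x 1 := by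
      intro x y
      have := map_sw (f x) y (fun x1 x2 => x1 * S x2)
      rw [← this, sw_mul_antipode]; simp
    simp only [this]
    exact sw_counit_right (f.flip 1) h
  · apply IsTri.mk <;> intros <;> simp [add_mul, mul_add]

/-- The antipode is anti-comultiplicative. -/
theorem comul_antipode (h : A) : comul (R := K) (S h) = sw K h (fun x y => S y ⊗ₜ[K] S x) := by
  set G : A →ₗ[K] A ⊗[K] A := TensorProduct.map S S ∘ₗ (TensorProduct.comm K A A).toLinearMap ∘ₗ
    comul with hG
  have hGa : ∀ x, G x = sw K x (fun x y => S y ⊗ₜ[K] S x) := by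
    intro x
    rw [hG, comp_apply, comp_apply, ← sw_tmul (K := K) x, LinearEquiv.coe_coe]
    simp [sw, map_sum]
  have key : WithConv.toConv G = WithConv.toConv (comul ∘ₗ S) := by
    refine left_inv_eq_right_inv (a := WithConv.toConv (comul (R := K) (A := A))) ?_
      LinearMap.comul_right_inv
    ext x
    rw [(ℛ K x).convMul_apply]
    change sw K x (fun a b => G a * comul b) = _
    have h1 : ∀ a b : A, G a * comul (R := K) b =
      sw K a (fun a1 a2 => sw K b (fun b1 b2 => (S a2 * b1) ⊗ₜ[K] (S a1 * b2))) := by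
      intro a b
      rw [hGa, sw_mul_right', ← sw_tmul (K := K) b]
      simp only [mul_sw', Algebra.TensorProduct.tmul_mul_tmul]
    simp only [h1]
    rw [sw_coassoc (T := fun a1 a2 b => sw K b (fun b1 b2 => (S a2 * b1) ⊗ₜ[K] (S a1 * b2)))]
    · have h2 : ∀ a y : A, sw K y (fun y1 y2 => sw K y2
          fun b1 b2 => (S y1 * b1) ⊗ₜ[K] (S a * b2)) = 1 ⊗ₜ[K] (S a * y) := by
        intro a y
        have := I4' ((TensorProduct.mk K A A).compl₂ (LinearMap.mul K A (S a))) y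
        simpa using this
      simp only [h2]
      have := map_sw (TensorProduct.mk K A A 1) x (fun x y => S x * y)
      simp only [TensorProduct.mk_apply] at this
      rw [← this, sw_antipode_mul]
      simp [Algebra.algebraMap_eq_smul_one, Algebra.TensorProduct.one_def]
    · have h3 : ∀ a1 a2 b : A, sw K b (fun b1 b2 => (S a2 * b1) ⊗ₜ[K] (S a1 * b2)) =
          (S a2 ⊗ₜ[K] S a1) * comul b := by
        intro a1 a2 b
        rw [← sw_tmul (K := K) b, mul_sw']; simp
      simp only [h3]
      apply IsTri.mk <;> intros <;> simp [add_mul, mul_add, tmul_add, add_tmul, ← smul_tmul']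
  rw [← hGa]
  exact (congrArg (fun g : WithConv (A →ₗ[K] A ⊗[K] A) => g.ofConv h) key).symm

theorem sw_antipode {B : A → A → M} (hB : IsBil K B) (h : A) :
    sw K (S h) B = sw K h (fun x y => B (S y) (S x)) :=
  sw_ext hB _ _ _ (comul_antipode h)

end
end LR


namespace LR
open Coalgebra HopfAlgebra
noncomputable section

set_option linter.unusedSectionVars false
variable {K A : Type*} [Field K] [Ring A] [HopfAlgebra K A]
variable {M N : Type*} [AddCommGroup M] [Module K M] [AddCommGroup N] [Module K N]

local notation "S" => antipode K (A := A)
local notation "ε" => Coalgebra.counit (R := K) (A := A)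

variable (K A) in
/-- Square of the antipode. -/
def sg : A →ₐ[K] A := AlgHom.ofLinearMap (S ∘ₗ S) (by simp) (fun x y => by simp [S_mul])

theorem sg_apply (x : A) : sg K A x = S (S x) := rfl

variable (K A) in
/-- The twisted trace functional. -/
def psi : A →ₗ[K] K :=
  LinearMap.trace K A ∘ₗ LinearMap.lcomp K A (sg K A).toLinearMap ∘ₗ LinearMap.mul K A

theorem psi_apply (h : A) :
    psi K A h = LinearMap.trace K A (LinearMap.mul K A h ∘ₗ (sg K A).toLinearMap) := rfl

/-- contraction of the first leg -/
def cL (f : A →ₗ[K] K) : A →ₗ[K] A := lift ((LinearMap.lsmul K A) ∘ₗ f) ∘ₗ comul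

theorem cL_apply (f : A →ₗ[K] K) (z : A) : cL f z = sw K z (fun x y => f x • y) := by
  rw [cL, comp_apply, ← sw_lin]; simp

/-- contraction of the second leg -/
def cR (f : A →ₗ[K] K) : A →ₗ[K] A := lift ((LinearMap.lsmul K A) ∘ₗ f).flip ∘ₗ comul

theorem cR_apply (f : A →ₗ[K] K) (z : A) : cR f z = sw K z (fun x y => f y • x) := by
  rw [cR, comp_apply, ← sw_lin]; simp

theorem dual_cR (f p : A →ₗ[K] K) (z : A) : p (cR f z) = f (cL p z) := by
  rw [cR_apply, cL_apply, map_sw, map_sw]; simp [mul_comm]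

theorem sw_sg {B : A → A → M} (hB : IsBil K B) (h : A) :
    sw K (sg K A h) B = sw K h (fun x y => B (sg K A x) (sg K A y)) := by
  rw [sg_apply, sw_antipode hB, sw_antipode]; rfl
  obtain ⟨L, hL⟩ := hB
  simp only [← hL]
  apply IsBil.mk <;> intros <;> simp [tmul_add, add_tmul, ← smul_tmul']

theorem I3 (f : A →ₗ[K] A →ₗ[K] M) (h : A) :
    sw K h (fun x y => sw K y (fun y1 y2 => f (sg K A y1 * S x) y2)) = f 1 h := by
  have := I4 (f ∘ₗ S) h
  simpa [S_mul, sg_apply] using this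

theorem coordsum {ι : Type*} [Fintype ι] (b : Module.Basis ι K A) (g : A →ₗ[K] K) (w : A) :
    ∑ k, b.repr w k * g (b k) = g w := by
  conv_rhs => rw [← b.sum_repr w, map_sum]
  simp only [map_smul, smul_eq_mul]

theorem psi_cL [FiniteDimensional K A] (p : A →ₗ[K] K) (h : A) :
    psi K A (cL p h) = p 1 * psi K A h := by
  let b := Module.finBasis K A
  let P := fun k => cL (p ∘ₗ (LinearMap.mul K A).flip (b k))
  let Q := fun k => cL (b.coord k ∘ₗ S)
  let T := LinearMap.mul K A h ∘ₗ (sg K A).toLinearMap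
  have e1 : LinearMap.mul K A (cL p h) ∘ₗ (sg K A).toLinearMap = ∑ k, P k * (T * Q k) := by
    ext x
    have e0 : (∑ k, P k * (T * Q k)) x = sw K x (fun x1 x2 => ∑ k,
        cL (p ∘ₗ (LinearMap.mul K A).flip (b k)) (h * sg K A (b.repr (S x1) k • x2))) := by
      rw [LinearMap.sum_apply, ← sw_finsum]
      refine Finset.sum_congr rfl fun k _ => ?_
      simp only [Module.End.mul_apply, Q]
      rw [cL_apply (b.coord k ∘ₗ S), map_sw, map_sw]
      simp [P, T]
    rw [e0]
    have hB : ∀ w : A, IsBil K (fun x y : A => p (x * w) • y) := fun w => by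
      apply IsBil.mk <;> intros <;> simp [add_mul, add_smul, smul_smul, mul_comm]
    have e2 : ∀ x1 x2 : A, ∑ k, cL (p ∘ₗ (LinearMap.mul K A).flip (b k))
        (h * sg K A (b.repr (S x1) k • x2)) =
        sw K h (fun h1 h2 => sw K x2 (fun y1 y2 => p (h1 * (sg K A y1 * S x1)) • (h2 * sg K A y2)))
        := by
      intro x1 x2
      have : ∑ k, cL (p ∘ₗ (LinearMap.mul K A).flip (b k)) (h * sg K A (b.repr (S x1) k • x2))
        = cL (p ∘ₗ (LinearMap.mul K A).flip (S x1)) (h * sg K A x2) := by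
        simp only [map_smul, mul_smul_comm]
        simp only [cL_apply, smul_sw]
        rw [sw_finsum]
        congr 1; ext u v
        simp only [smul_smul, ← Finset.sum_smul]
        congr 1
        exact coordsum b (p ∘ₗ LinearMap.mul K A u) (S x1)
      rw [this, cL_apply]
      simp only [comp_apply, flip_apply, mul_apply']
      rw [sw_mul (hB _)]
      congr 1; ext h1 h2
      rw [sw_sg]
      · simp [mul_assoc]
      · apply IsBil.mk <;> intros <;> simp [mul_add, add_mul, add_smul, smul_smul, mul_comm]
    simp only [e2]
    rw [sw_comm]
    have e3 : ∀ h1 h2, sw K x (fun x1 x2 => sw K x2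
        (fun y1 y2 => p (h1 * (sg K A y1 * S x1)) • (h2 * sg K A y2))) =
        p h1 • (h2 * sg K A x) := by
      intro h1 h2
      have := I3 (LinearMap.mk₂ K (fun u v : A => p (h1 * u) • (h2 * sg K A v))
        (by intros; simp [mul_add, add_smul]) (by intros; simp [smul_smul])
        (by intros; simp [mul_add]) (by intros; simp [smul_smul, mul_comm])) x
      simpa using this
    simp only [e3]
    rw [comp_apply, mul_apply', cL_apply, sw_mul_right]; simp
  have e4 : ∑ k, Q k * P k = p 1 • LinearMap.id := by
    ext y
    simp only [LinearMap.sum_apply, Module.End.mul_apply, P, Q]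
    have e5 : ∀ k, cL (b.coord k ∘ₗ S) (cL (p ∘ₗ (LinearMap.mul K A).flip (b k)) y) =
      sw K y (fun y1 y' => sw K y' (fun y2 y3 => (p (y1 * b k) * b.repr (S y2) k) • y3)) := by
      intro k
      rw [cL_apply _ y, map_sw]
      simp only [map_smul, cL_apply, smul_sw]
      simp [smul_smul]
    simp only [e5]
    rw [sw_finsum]
    simp only [sw_finsum]
    have e6 : ∀ y1 y2 : A, ∑ k, p (y1 * b k) * b.repr (S y2) k = p (y1 * S y2) := by
      intro y1 y2
      refine Eq.trans ?_ (coordsum b (p ∘ₗ LinearMap.mul K A y1) (S y2))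
      simp [mul_comm]
    simp only [← Finset.sum_smul, e6]
    have := I4 ((LinearMap.lsmul K A) ∘ₗ p) y
    simpa using this
  rw [psi_apply, e1, map_sum]
  have : ∀ k, LinearMap.trace K A (P k * (T * Q k)) = LinearMap.trace K A (T * (Q k * P k)) := by
    intro k
    rw [LinearMap.trace_mul_comm, mul_assoc]
  simp only [this]
  rw [← map_sum, ← Finset.mul_sum, e4]
  rw [mul_smul_comm, map_smul, smul_eq_mul, psi_apply]; rfl

theorem psi_int [FiniteDimensional K A] (h : A) : cR (psi K A) h = psi K A h • 1 := by
  rw [← sub_eq_zero, ← Module.forall_dual_apply_eq_zero_iff K]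
  intro p
  rw [map_sub, dual_cR, psi_cL]; simp [mul_comm]

variable (K) in
/-- two-sided normalised integral -/
structure Haar (l : A) : Prop where
  left : ∀ h : A, h * l = ε h • l
  right : ∀ h : A, l * h = ε h • l
  counit : ε l = 1

variable {l : A}

theorem psi_l [FiniteDimensional K A] (H : Haar K l) : psi K A l = 1 := by
  rw [psi_apply]
  have : LinearMap.mul K A l ∘ₗ (sg K A).toLinearMap = (ε).smulRight l := by
    ext x; simp [H.right, sg_apply]
  rw [this, LinearMap.trace_smulRight, H.counit]

/-- l₁ h ⊗ l₂ = l₁ ⊗ l₂ S(h) -/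
theorem comul_l_mul (H : Haar K l) (h : A) :
    comul (R := K) l * (h ⊗ₜ[K] 1) = comul l * (1 ⊗ₜ[K] S h) := by
  have h1 : h ⊗ₜ[K] (1 : A) = sw K h (fun x y => comul (R := K) x * (1 ⊗ₜ S y)) := by
    refine (I5 (TensorProduct.mk K A A) h).symm.trans ?_
    congr 1; ext x y
    rw [← sw_tmul (K := K) x, sw_mul_right']; simp
  rw [h1, mul_sw']
  simp only [← mul_assoc, ← Bialgebra.comul_mul, H.right, map_smul, smul_mul_assoc]
  exact sw_counit_left ((LinearMap.mul K (A ⊗[K] A) (comul l)) ∘ₗ (TensorProduct.mk K A A 1) ∘ₗ S) h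

/-- S(h) l₁ ⊗ l₂ = l₁ ⊗ h l₂ -/
theorem mul_comul_l (H : Haar K l) (h : A) :
    (S h ⊗ₜ[K] 1) * comul (R := K) l = (1 ⊗ₜ[K] h) * comul (R := K) l := by
  have h1 : (1 : A) ⊗ₜ[K] h = sw K h (fun x y => (S x ⊗ₜ 1) * comul (R := K) y) := by
    rw [← TensorProduct.mk_apply, ← (I4' (TensorProduct.mk K A A) h)]
    congr 1; ext x y
    rw [← sw_tmul (K := K) y, mul_sw']; simp
  rw [h1, sw_mul_right']
  simp only [mul_assoc, ← Bialgebra.comul_mul, H.left, map_smul, mul_smul_comm]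
  exact (sw_counit_right ((LinearMap.mul K (A ⊗[K] A)).flip (comul l) ∘ₗ
    (TensorProduct.mk K A A).flip 1 ∘ₗ S) h).symm

/-- h = l₁ ψ(l₂ S(h)) -/
theorem recon_right [FiniteDimensional K A] (H : Haar K l) (h : A) :
    sw K l (fun x y => psi K A (y * S h) • x) = h := by
  have := congrArg (lift ((LinearMap.lsmul K A) ∘ₗ psi K A).flip) (comul_l_mul H h)
  rw [← sw_tmul (K := K), sw_mul_right', sw_mul_right', map_sw, map_sw] at this
  simp only [Algebra.TensorProduct.tmul_mul_tmul, lift.tmul, flip_apply, comp_apply, lsmul_apply,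
    mul_one] at this
  rw [← this]
  have h2 := psi_int (K := K) l
  rw [cR_apply] at h2
  have := congrArg (· * h) h2
  simp only [sw_mul_right, smul_mul_assoc] at this
  rw [this, psi_l H]; simp

/-- S h = l₁ ψ(h l₂) -/
theorem recon_left [FiniteDimensional K A] (H : Haar K l) (h : A) :
    sw K l (fun x y => psi K A (h * y) • x) = S h := by
  have := congrArg (lift ((LinearMap.lsmul K A) ∘ₗ psi K A).flip) (mul_comul_l H h)
  rw [← sw_tmul (K := K), mul_sw', mul_sw', map_sw, map_sw] at this
  simp only [Algebra.TensorProduct.tmul_mul_tmul, lift.tmul, flip_apply, comp_apply, lsmul_apply,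
    one_mul] at this
  rw [← this]
  have h2 := psi_int (K := K) l
  rw [cR_apply] at h2
  have := congrArg (S h * ·) h2
  simp only [mul_sw, mul_smul_comm] at this
  rw [this, psi_l H]; simp

theorem S_inj [FiniteDimensional K A] (H : Haar K l) : Function.Injective S := by
  intro x y e
  rw [← recon_right H x, e, recon_right H y]

theorem S_surj [FiniteDimensional K A] (H : Haar K l) : Function.Surjective S :=
  LinearMap.surjective_of_injective (S_inj H)

theorem sg_surj [FiniteDimensional K A] (H : Haar K l) : Function.Surjective (sg K A) :=
  (S_surj H).comp (S_surj H)

theorem sg_inj [FiniteDimensional K A] (H : Haar K l) : Function.Injective (sg K A) :=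
  (S_inj H).comp (S_inj H)

theorem nondeg [FiniteDimensional K A] (H : Haar K l) {h k : A}
    (e : ∀ x, psi K A (h * x) = psi K A (k * x)) : h = k := by
  apply S_inj H
  rw [← recon_left H, ← recon_left H]
  simp [e]

theorem exists_rep [FiniteDimensional K A] (H : Haar K l) (f : A →ₗ[K] K) :
    ∃ u, ∀ x, psi K A (u * x) = f x := by
  let Φ : A →ₗ[K] (A →ₗ[K] K) := LinearMap.compr₂ (LinearMap.mul K A) (psi K A)
  have hinj : Function.Injective Φ := fun h k e =>
    nondeg H (fun x => by simpa [Φ] using LinearMap.congr_fun e x)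
  have hs : Function.Surjective Φ :=
    (LinearMap.injective_iff_surjective_of_finrank_eq_finrank
      (Subspace.dual_finrank_eq (K := K) (V := A)).symm).1 hinj
  obtain ⟨u, hu⟩ := hs f
  exact ⟨u, fun x => by simpa [Φ] using LinearMap.congr_fun hu x⟩

theorem psi_comm [FiniteDimensional K A] (a b : A) :
    psi K A (b * a) = psi K A (a * sg K A b) := by
  simp only [psi_apply]
  have : LinearMap.mul K A (a * sg K A b) ∘ₗ (sg K A).toLinearMap =
    (LinearMap.mul K A a ∘ₗ (sg K A).toLinearMap) ∘ₗ LinearMap.mul K A b := by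
    ext x; simp [mul_assoc]
  rw [this]
  change _ = LinearMap.trace K A (_ * _)
  rw [LinearMap.trace_mul_comm]
  congr 1
  ext x; simp [mul_assoc]

theorem S_l [FiniteDimensional K A] (H : Haar K l) : S l = l := by
  have h1 : l * S l = l := by rw [H.right]; simp [H.counit]
  obtain ⟨k, hk⟩ := S_surj H l
  have h2 : l * S l = S l := by
    nth_rewrite 1 [← hk]
    rw [← S_mul, H.right, ← counit_antipode, hk, H.counit, one_smul]
  rw [← h2, h1]

end
end LR


namespace LR
open Coalgebra HopfAlgebra
noncomputable section

set_option linter.unusedSectionVars false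
variable {K A : Type*} [Field K] [Ring A] [HopfAlgebra K A]
variable {M N : Type*} [AddCommGroup M] [Module K M] [AddCommGroup N] [Module K N]

local notation "S" => antipode K (A := A)
local notation "ε" => Coalgebra.counit (R := K) (A := A)

variable {l : A} [FiniteDimensional K A]

theorem cR_inj (H : Haar K l) {f g : A →ₗ[K] K} (e : cR f l = cR g l) : f = g := by
  let Φ : (A →ₗ[K] K) →ₗ[K] A :=
    { toFun := fun f => cR f l
      map_add' := fun f g => by simp [cR_apply, add_smul, sw, Finset.sum_add_distrib]
      map_smul' := fun c f => by simp [cR_apply, smul_sw, smul_smul] }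
  have hs : Function.Surjective Φ := fun h => by
    refine ⟨psi K A ∘ₗ (LinearMap.mul K A).flip (S h), ?_⟩
    refine Eq.trans ?_ (recon_right H h)
    simp [Φ, cR_apply]
  have hi : Function.Injective Φ :=
    (LinearMap.injective_iff_surjective_of_finrank_eq_finrank
      (Subspace.dual_finrank_eq (K := K) (V := A))).2 hs
  exact hi e

theorem psi_right (H : Haar K l) (h : A) : cL (psi K A) h = psi K A h • cL (psi K A) l := by
  rw [← sub_eq_zero, ← Module.forall_dual_apply_eq_zero_iff K]
  intro p
  have hcRp : ∀ h, cR (p ∘ₗ cL (psi K A)) h = p (cL (psi K A) h) • 1 := by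
    intro h
    rw [cR_apply]
    simp only [comp_apply, cL_apply, map_sw, sw_smul_right]
    rw [← sw_coassoc (T := fun x y1 y2 => p (psi K A y1 • y2) • x)]
    · congr 1; ext x y
      have := congrArg (fun t => p y • t) (psi_int (K := K) x)
      simp only [cR_apply, smul_sw, smul_smul] at this
      simpa [mul_comm] using this
    · apply IsTri.mk <;> intros <;> simp [add_smul, smul_smul, mul_add, add_mul] <;> 
        first | ring_nf | skip
  have : p ∘ₗ cL (psi K A) = p (cL (psi K A) l) • psi K A := by
    apply cR_inj H
    rw [hcRp]
    have h2 : cR (p (cL (psi K A) l) • psi K A) l = p (cL (psi K A) l) • cR (psi K A) l := by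
      simp [cR_apply, smul_sw, smul_smul]
    rw [h2, psi_int, psi_l H]; simp
  have := LinearMap.congr_fun this h
  simp only [comp_apply, LinearMap.smul_apply, smul_eq_mul] at this
  rw [map_sub, map_smul, this, smul_eq_mul]; ring

theorem grouplike (H : Haar K l) : IsGroupLikeElem K (cL (psi K A) l) where
  counit_eq_one := by
    rw [cL_apply, map_sw]
    simp only [map_smul, smul_eq_mul]
    have := sw_counit_right (psi K A) l
    simp only [smul_eq_mul] at this
    rw [← psi_l H, ← this]; congr 1; ext x y; ring
  comul_eq_tmul_self := by
    set a := cL (psi K A) l with ha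
    have h1 : comul (R := K) a = sw K l (fun x y => psi K A x • comul (R := K) y) := by
      rw [ha, cL_apply, map_sw]; simp
    have h2 : ∀ x y : A, psi K A x • comul (R := K) y =
        sw K y (fun y1 y2 => (psi K A x • y1) ⊗ₜ[K] y2) := by
      intro x y; rw [← sw_tmul (K := K) y, smul_sw]; simp [smul_tmul']
    rw [h1]
    simp only [h2]
    rw [← sw_coassoc (T := fun x y1 y2 => (psi K A x • y1) ⊗ₜ[K] y2)]
    · have h3 : ∀ x y : A, sw K x (fun x1 x2 => (psi K A x1 • x2) ⊗ₜ[K] y) =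
          a ⊗ₜ[K] (psi K A x • y) := by
        intro x y
        have := map_sw ((TensorProduct.mk K A A).flip y) x (fun x1 x2 => psi K A x1 • x2)
        rw [← cL_apply, psi_right H] at this
        simp only [flip_apply, mk_apply] at this
        rw [← this, tmul_smul, smul_tmul']
      simp only [h3]
      have := map_sw (TensorProduct.mk K A A a) l (fun x1 x2 => psi K A x1 • x2)
      rw [← cL_apply] at this
      exact this.symm
    · apply IsTri.mk <;> intros <;>
        simp [add_smul, smul_smul, mul_add, add_mul, tmul_add, add_tmul, smul_tmul', mul_comm]

theorem conj_a (H : Haar K l) (c : A) :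
    c * cL (psi K A) l = cL (psi K A) l * sg K A (sg K A c) := by
  obtain ⟨g, hg⟩ := exists_rep H (psi K A ∘ₗ S)
  simp only [comp_apply] at hg
  have h1 : ∀ c, c * g = g * sg K A (sg K A c) := by
    intro c
    apply nondeg H
    intro x
    rw [mul_assoc, psi_comm, mul_assoc, hg, S_mul, psi_comm, mul_assoc, hg, S_mul]
    rfl
  have h2 : sg K A g = cL (psi K A) l := by
    have := recon_left H g
    rw [sg_apply, ← this, map_sw]
    simp only [hg]
    rw [cL_apply]
    conv_rhs => rw [← S_l H]
    rw [sw_antipode]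
    · simp
    · apply IsBil.mk <;> intros <;> simp [add_smul, smul_smul, mul_comm]
  obtain ⟨c, rfl⟩ := sg_surj H c
  rw [← h2, ← map_mul, h1, map_mul]

theorem a_pow (H : Haar K l) : ∃ N : ℕ, 0 < N ∧ (cL (psi K A) l) ^ N = 1 := by
  set a := cL (psi K A) l
  have ha : IsGroupLikeElem K a := grouplike H
  have hfin : Finite (GroupLike K A) := (linearIndep_groupLikeVal (R := K) (A := A)).finite
  let g : GroupLike K A := ⟨a, ha⟩
  obtain ⟨N, hN, e⟩ := (isOfFinOrder_of_finite g).exists_pow_eq_one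
  exact ⟨N, hN, congrArg GroupLike.val e⟩

theorem sg_order (H : Haar K l) : ∃ N : ℕ, 0 < N ∧ ∀ x, (sg K A)^[N] x = x := by
  obtain ⟨N, hN, e⟩ := a_pow H
  refine ⟨2 * N, by omega, fun x => ?_⟩
  have : ∀ n : ℕ, x * (cL (psi K A) l) ^ n = (cL (psi K A) l) ^ n * (sg K A)^[2 * n] x := by
    intro n
    induction n with
    | zero => simp
    | succ n ih =>
      rw [pow_succ, ← mul_assoc, ih, mul_assoc, conj_a H, ← mul_assoc,
        show 2 * (n + 1) = 2 * n + 1 + 1 by ring, Function.iterate_succ_apply',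
        Function.iterate_succ_apply']
  have := this N
  rw [e] at this
  simpa using this.symm

theorem sg_sg (H : Haar K l) (h1 : psi K A 1 ≠ 0) (x : A) : sg K A (sg K A x) = x := by
  have ha : cL (psi K A) l = 1 := by
    have := psi_right H 1
    have h2 : cL (psi K A) 1 = psi K A 1 • 1 := by simp [cL, Algebra.TensorProduct.one_def]
    rw [h2] at this
    exact (smul_right_injective A h1 this).symm
  have := conj_a H x
  rw [ha] at this
  simpa using this.symm

end
end LR


namespace LR
open Coalgebra HopfAlgebra
noncomputable section

set_option linter.unusedSectionVars false
variable {K A : Type*} [Field K] [Ring A] [HopfAlgebra K A]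
variable {M N : Type*} [AddCommGroup M] [Module K M] [AddCommGroup N] [Module K N]

local notation "S" => antipode K (A := A)
local notation "ε" => Coalgebra.counit (R := K) (A := A)

variable {l : A} [FiniteDimensional K A]

theorem casimir (H : Haar K l) (h : A) :
    sw K l (fun x y => (h * x) ⊗ₜ[K] S y) = sw K l (fun x y => x ⊗ₜ[K] (S y * h)) := by
  obtain ⟨k, rfl⟩ := S_surj H h
  have := congrArg (TensorProduct.map LinearMap.id S) (mul_comul_l H k)
  rw [← sw_tmul (K := K), mul_sw', mul_sw', map_sw, map_sw] at this
  simpa [S_mul] using this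

theorem maschke (H : Haar K l) : IsSemisimpleRing A := by
  refine { exists_isCompl := fun N => ?_ }
  obtain ⟨p, hp⟩ := (N.restrictScalars K).subtype.exists_leftInverse_of_injective
    (Submodule.ker_subtype _)
  have hp' : ∀ x : N, p (x : A) = x := fun x => LinearMap.congr_fun hp x
  let p' : A →ₗ[K] N := p
  have hp'' : ∀ x : N, p' (x : A) = x := hp'
  let q : A →ₗ[A] N :=
    { toFun := fun m => sw K l (fun x y => x • p' (S y * m))
      map_add' := fun m n => by simp [mul_add, sw, Finset.sum_add_distrib]
      map_smul' := fun h m => by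
        let L : A ⊗[K] A →ₗ[K] N := lift (LinearMap.mk₂ K (fun x z => x • p' (z * m))
          (by intros; simp [add_smul]) (by intros; simp)
          (by intros; simp [add_mul]) (by intro c x z; rw [smul_mul_assoc, map_smul]; exact smul_comm _ _ _))
        have := congrArg L (casimir H h)
        rw [map_sw, map_sw] at this
        simp only [L, lift.tmul, mk₂_apply] at this
        simp only [smul_eq_mul, RingHom.id_apply, ← mul_assoc]
        rw [← this]
        simp [sw, Finset.smul_sum, mul_smul] }
  refine ⟨_, LinearMap.isCompl_of_proj (f := q) (fun m => ?_)⟩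
  change sw K l (fun x y => x • p' (S y * m)) = m
  have : ∀ x y : A, x • p' (S y * m) = (x * S y) • m := by
    intro x y
    have := hp'' (S y • m)
    rw [Submodule.coe_smul, smul_eq_mul] at this
    rw [this, smul_smul]
  simp only [this]
  have h2 : sw K l (fun x y => (x * S y) • m) = (sw K l (fun x y => (x * S y))) • m := by
    simp [sw, Finset.sum_smul]
  rw [h2, sw_mul_antipode, H.counit]; simp

end
end LR

namespace LR
noncomputable section
section pos
variable (K : Type*) [Field K] [CharZero K]

/-- an embedding of the algebraic numbers of `K` into `ℂ`. -/
def th : algebraicClosure ℚ K →+* ℂ :=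
  letI : Algebra ℚ (algebraicClosure ℚ K) := (algebraicClosure ℚ K).algebra'
  haveI : Algebra.IsAlgebraic ℚ (algebraicClosure ℚ K) := algebraicClosure.isAlgebraic ℚ K
  (IsAlgClosed.lift : algebraicClosure ℚ K →ₐ[ℚ] ℂ).toRingHom

/-- pairs of algebraic numbers conjugate to each other. -/
def cpair : AddSubmonoid (K × K) where
  carrier := {p | ∃ x y : algebraicClosure ℚ K, (x : K) = p.1 ∧ (y : K) = p.2 ∧
    th K y = starRingEnd ℂ (th K x)}
  zero_mem' := ⟨0, 0, by simp, by simp, by simp⟩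
  add_mem' := by
    rintro _ _ ⟨x, y, h1, h2, h3⟩ ⟨x', y', h1', h2', h3'⟩
    exact ⟨x + x', y + y', by simp [h1, h1'], by simp [h2, h2'], by simp [h3, h3']⟩

theorem cpair_root {N : ℕ} (hN : 0 < N) {z : K} (hz : z ^ N = 1) : (z, z⁻¹) ∈ cpair K := by
  have hi : IsIntegral ℚ z := by
    refine ⟨Polynomial.X ^ N - Polynomial.C 1, Polynomial.monic_X_pow_sub_C _ hN.ne', by simp [hz]⟩
  have hm : z ∈ algebraicClosure ℚ K := mem_algebraicClosure_iff.2 hi.isAlgebraic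
  let x : algebraicClosure ℚ K := ⟨z, hm⟩
  have hx : x ^ N = 1 := by ext; simpa [x] using hz
  refine ⟨x, x⁻¹, rfl, rfl, ?_⟩
  have h2 : (th K x) ^ N = 1 := by rw [← map_pow, hx, map_one]
  have h3 : ‖th K x‖ = 1 := Complex.norm_eq_one_of_pow_eq_one h2 hN.ne'
  rw [map_inv₀, Complex.inv_def, Complex.normSq_eq_norm_sq, h3]; simp

theorem cpair_zero {ι : Type*} (s : Finset ι) (a b : ι → K) (h : ∀ i ∈ s, (a i, b i) ∈ cpair K)
    (h0 : ∑ i ∈ s, a i * b i = 0) : ∀ i ∈ s, a i = 0 := by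
  have h' : ∀ i : ι, ∃ x y : algebraicClosure ℚ K, i ∈ s → (x : K) = a i ∧ (y : K) = b i ∧
    th K y = starRingEnd ℂ (th K x) := by
    intro i
    by_cases hi : i ∈ s
    · obtain ⟨x, y, h⟩ := h i hi
      exact ⟨x, y, fun _ => h⟩
    · exact ⟨0, 0, fun h => absurd h hi⟩
  choose x y hxy using h'
  have h1 : ∑ i ∈ s, x i * y i = 0 := by
    apply Subtype.ext
    push_cast
    rw [← h0]
    exact Finset.sum_congr rfl fun i hi => by rw [(hxy i hi).1, (hxy i hi).2.1]
  have h2 := congrArg (th K) h1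
  rw [map_sum, map_zero] at h2
  have h3 : ∑ i ∈ s, Complex.normSq (th K (x i)) = 0 := by
    apply Complex.ofReal_injective
    push_cast
    rw [← h2]
    exact Finset.sum_congr rfl fun i hi => by rw [map_mul, (hxy i hi).2.2, Complex.mul_conj]
  rw [Finset.sum_eq_zero_iff_of_nonneg (fun i _ => Complex.normSq_nonneg _)] at h3
  intro i hi
  have := h3 i hi
  rw [Complex.normSq_eq_zero, map_eq_zero] at this
  rw [← (hxy i hi).1, this]; rfl


theorem cpair_trace [IsAlgClosed K] {V : Type*} [AddCommGroup V] [Module K V]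
    [FiniteDimensional K V] {f g : Module.End K V} {N : ℕ} (hN : 0 < N) (hf : f ^ N = 1)
    (hg : g * f = 1) : (LinearMap.trace K V f, LinearMap.trace K V g) ∈ cpair K := by
  have hs : f.IsSemisimple := by
    refine Module.End.isSemisimple_of_squarefree_aeval_eq_zero
      (p := Polynomial.X ^ N - Polynomial.C 1)
      (Polynomial.separable_X_pow_sub_C (1 : K) (by exact_mod_cast hN.ne') one_ne_zero).squarefree ?_
    simp [hf]
  classical
  have hi := DirectSum.isInternal_submodule_of_iSupIndep_of_iSup_eq_top
    f.eigenspaces_iSupIndep hs.iSup_eigenspace_eq_top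
  have hfin : {μ | f.eigenspace μ ≠ ⊥}.Finite :=
      WellFoundedGT.finite_ne_bot_of_iSupIndep f.eigenspaces_iSupIndep
  have hr : ∀ μ, f.eigenspace μ ≠ ⊥ → μ ^ N = 1 := by
    intro μ hμ
    obtain ⟨x, hx, hx0⟩ := Submodule.exists_mem_ne_zero_of_ne_bot hμ
    have : (f ^ N) x = μ ^ N • x := by
      exact Module.End.HasEigenvector.pow_apply ⟨hx, hx0⟩ N
    rw [hf] at this
    have h2 : (1 - μ ^ N) • x = 0 := by rw [sub_smul, ← this]; simp
    exact (sub_eq_zero.1 ((smul_eq_zero.1 h2).resolve_right hx0)).symm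
  have h0 : f.eigenspace 0 = ⊥ := by
    by_contra h
    have := hr 0 h
    rw [zero_pow hN.ne'] at this
    exact zero_ne_one this
  have hfx : ∀ μ, ∀ x ∈ f.eigenspace μ, f x = μ • x := fun μ x hx =>
    Module.End.mem_eigenspace_iff.1 hx
  have hgx : ∀ μ, ∀ x ∈ f.eigenspace μ, g x = μ⁻¹ • x := by
    intro μ x hx
    by_cases hμ : μ = 0
    · subst hμ; rw [h0] at hx; rw [(Submodule.mem_bot K).1 hx]; simp
    · have h1 : g (f x) = x := LinearMap.congr_fun hg x
      rw [hfx μ x hx, map_smul] at h1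
      conv_rhs => rw [← h1]
      rw [smul_smul, inv_mul_cancel₀ hμ, one_smul]
  have hfm : ∀ μ, Set.MapsTo f (f.eigenspace μ) (f.eigenspace μ) := fun μ x hx => by
    rw [hfx μ x hx]; exact Submodule.smul_mem _ _ hx
  have hgm : ∀ μ, Set.MapsTo g (f.eigenspace μ) (f.eigenspace μ) := fun μ x hx => by
    rw [hgx μ x hx]; exact Submodule.smul_mem _ _ hx
  have key : ∀ (g : Module.End K V) (c : K) (μ : K)
      (hm : Set.MapsTo g (f.eigenspace μ) (f.eigenspace μ))
      (_ : ∀ x ∈ f.eigenspace μ, g x = c • x),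
      LinearMap.trace K _ (g.restrict hm) = Module.finrank K (f.eigenspace μ) • c := by
    intro g c μ hm h
    have : g.restrict hm = c • LinearMap.id := by
      ext x; exact h x x.2
    rw [this, map_smul, LinearMap.trace_id]; simp [mul_comm]
  rw [LinearMap.trace_eq_sum_trace_restrict' hi hfin hfm,
    LinearMap.trace_eq_sum_trace_restrict' hi hfin hgm]
  simp only [key f _ _ (hfm _) (hfx _), key g _ _ (hgm _) (hgx _)]
  have : ((∑ μ ∈ hfin.toFinset, Module.finrank K (f.eigenspace μ) • μ,
      ∑ μ ∈ hfin.toFinset, Module.finrank K (f.eigenspace μ) • μ⁻¹) : K × K) =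
      ∑ μ ∈ hfin.toFinset, Module.finrank K (f.eigenspace μ) • ((μ, μ⁻¹) : K × K) := by
    ext <;> simp [Prod.fst_sum, Prod.snd_sum]
  rw [this]
  refine AddSubmonoid.sum_mem _ fun μ hμ => AddSubmonoid.nsmul_mem _ ?_ _
  exact cpair_root K hN (hr μ (by simpa using hμ))

end pos
end
end LR


namespace LR
open Coalgebra HopfAlgebra
noncomputable section

set_option linter.unusedSectionVars false
variable {K A : Type*} [Field K] [Ring A] [HopfAlgebra K A]
variable {M N : Type*} [AddCommGroup M] [Module K M] [AddCommGroup N] [Module K N]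

local notation "S" => antipode K (A := A)
local notation "ε" => Coalgebra.counit (R := K) (A := A)

variable {l : A} [FiniteDimensional K A]

theorem trLR {n : ℕ} {d : Fin n → ℕ} (a b : Π i, Matrix (Fin (d i)) (Fin (d i)) K) :
    LinearMap.trace K (Π i, Matrix (Fin (d i)) (Fin (d i)) K)
      (LinearMap.mulLeft K a ∘ₗ LinearMap.mulRight K b) =
      ∑ i, (a i).trace * (b i).trace := by
  classical
  rw [LinearMap.trace_eq_matrix_trace K
    (Pi.basis (fun i => Matrix.stdBasis K (Fin (d i)) (Fin (d i))))]
  simp only [Matrix.trace, Matrix.diag, toMatrix_apply, Fintype.sum_sigma, Fintype.sum_prod_type,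
    Finset.sum_mul_sum]
  refine Finset.sum_congr rfl fun i _ => Finset.sum_congr rfl fun p _ => 
    Finset.sum_congr rfl fun q _ => ?_
  rw [Pi.basis_apply, Pi.basis_repr, Matrix.stdBasis_eq_single]
  simp only [comp_apply, mulLeft_apply, mulRight_apply, Pi.mul_apply, Pi.single_eq_same]
  have : ∀ M : Matrix (Fin (d i)) (Fin (d i)) K, 
    (Matrix.stdBasis K (Fin (d i)) (Fin (d i))).repr M (p, q) = M p q := fun M => by
      simp [Matrix.stdBasis]
  rw [this]
  simp [Matrix.mul_apply, Matrix.single_apply, ite_and]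

variable [CharZero K] [IsAlgClosed K]

theorem psi_one_ne (H : Haar K l) : psi K A 1 ≠ 0 := by
  have := maschke H
  obtain ⟨n, d, hd, ⟨e⟩⟩ := IsSemisimpleRing.exists_algEquiv_pi_matrix_of_isAlgClosed K A
  let χ0 : A →ₗ[K] K := 
    (∑ i, Matrix.traceLinearMap (Fin (d i)) K K ∘ₗ LinearMap.proj i) ∘ₗ e.toLinearMap
  have hχ : ∀ x, χ0 x = ∑ i, (e x i).trace := fun x => by simp [χ0]
  have hcomm : ∀ x y, χ0 (x * y) = χ0 (y * x) := fun x y => by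
    simp only [hχ, map_mul, Pi.mul_apply]
    exact Finset.sum_congr rfl fun i _ => Matrix.trace_mul_comm _ _
  have hnd : ∀ x, (∀ y, χ0 (x * y) = 0) → x = 0 := by
    intro x hx
    apply e.injective
    rw [map_zero]
    ext i p q
    have := hx (e.symm (Pi.single i (Matrix.single q p 1)))
    rw [hχ, Finset.sum_eq_single i] at this
    · simpa [Matrix.trace_mul_single] using this
    · intro j _ hj; simp [Pi.single_eq_of_ne hj]
    · simp
  obtain ⟨u, hu⟩ := exists_rep H χ0
  have hsg : ∀ c, u * sg K A c = c * u := by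
    intro c
    apply nondeg H
    intro a
    rw [mul_assoc c, psi_comm (u * a) c, mul_assoc, mul_assoc, hu, hu, hcomm]
  have hinj : Function.Injective (LinearMap.mulLeft K u) := by
    rw [injective_iff_map_eq_zero]
    intro x hx
    refine hnd x fun y => ?_
    rw [← hu, ← mul_assoc]
    rw [mulLeft_apply] at hx
    simp [hx]
  obtain ⟨v, huv⟩ := LinearMap.surjective_of_injective hinj 1
  rw [mulLeft_apply] at huv
  have hvu : v * u = 1 := by
    apply hinj
    simp [← mul_assoc, huv]
  have hsg' : ∀ c, sg K A c = v * c * u := fun c => by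
    rw [mul_assoc, ← hsg, ← mul_assoc, hvu, one_mul]
  have hpsi : ∀ h, psi K A h = ∑ i, (e (h * v) i).trace * (e u i).trace := by
    intro h
    rw [psi_apply, ← trLR, ← LinearMap.trace_conj' _ e.toLinearEquiv]
    congr 1
    ext x
    simp [LinearEquiv.conj_apply, hsg', mul_assoc]
  obtain ⟨N, hN, hNs⟩ := sg_order H
  have hcen : ∀ c, c * u ^ N = u ^ N * c := by
    have : ∀ m c, c * u ^ m = u ^ m * (sg K A)^[m] c := by
      intro m
      induction m with
      | zero => simp
      | succ m ih =>
        intro c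
        rw [pow_succ, ← mul_assoc, ih, Function.iterate_succ_apply', mul_assoc, mul_assoc, hsg]
    intro c
    rw [this, hNs]
  have hblock : ∀ i, ∃ γ : K, γ ≠ 0 ∧ (e u i) ^ N = (γ ^ N) • 1 := by
    intro i
    have huv' : e u i * e v i = 1 := by
      rw [← Pi.mul_apply, ← map_mul, huv, map_one]; rfl
    have hc : ∀ M, Commute M (e u i ^ N) := by
      intro M
      have := congrFun (congrArg e (hcen (e.symm (Pi.single i M)))) i
      exact (by simpa using this : M * e u i ^ N = e u i ^ N * M)
    have h2 := Matrix.mem_range_scalar_of_commute_single (M := e u i ^ N) (fun p q _ => hc _)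
    obtain ⟨c, hc⟩ := h2
    obtain ⟨z, hz⟩ := IsAlgClosed.exists_pow_nat_eq c hN
    have h3 : e u i ^ N = z ^ N • 1 := by
      rw [hz, ← hc, Matrix.smul_one_eq_diagonal]; rfl
    refine ⟨z, ?_, h3⟩
    rintro rfl
    rw [zero_pow hN.ne', zero_smul] at h3
    have h4 : IsUnit (e u i) := IsUnit.of_mul_eq_one _ huv'
    have h5 := h4.pow N
    rw [h3] at h5
    have := hd i
    exact not_isUnit_zero h5
  choose γ hγ hγu using hblock
  intro h0
  rw [hpsi, one_mul] at h0
  have hz := cpair_zero K Finset.univ (fun i => (γ i)⁻¹ * (e u i).trace)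
    (fun i => γ i * (e v i).trace) (fun i _ => by
      have := cpair_trace K (V := Fin (d i) → K) (f := Matrix.toLin' ((γ i)⁻¹ • e u i))
        (g := Matrix.toLin' (γ i • e v i)) hN ?_ ?_
      · simpa only [Matrix.trace_toLin'_eq, Matrix.trace_smul, smul_eq_mul] using this
      · rw [← Matrix.toLin'_pow, smul_pow, hγu, smul_smul, ← mul_pow, inv_mul_cancel₀ (hγ i)]
        simp; rfl
      · have : e v i * e u i = 1 := by
          rw [← Pi.mul_apply, ← map_mul, hvu, map_one]; rfl
        rw [Module.End.mul_eq_comp, ← Matrix.toLin'_mul, smul_mul_smul_comm, this, mul_inv_cancel₀ (hγ i)]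
        simp; rfl)
    (by
      rw [← h0]
      refine Finset.sum_congr rfl fun i _ => ?_
      have := hγ i
      field_simp)
  have h1 := psi_l H
  rw [hpsi, Finset.sum_eq_zero] at h1
  · exact zero_ne_one h1
  · intro i hi
    have := hz i hi
    rw [mul_eq_zero, inv_eq_zero] at this
    rw [this.resolve_left (hγ i), mul_zero]

end
end LR


namespace LR
open Coalgebra HopfAlgebra
noncomputable section

set_option linter.unusedSectionVars false
variable {K A : Type*} [Field K] [Ring A] [HopfAlgebra K A]
variable {M N : Type*} [AddCommGroup M] [Module K M] [AddCommGroup N] [Module K N]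

local notation "S" => antipode K (A := A)
local notation "ε" => Coalgebra.counit (R := K) (A := A)

variable {l : A} [FiniteDimensional K A]

theorem trace_formula (H : Haar K l) (T : A →ₗ[K] A) :
    LinearMap.trace K A T = sw K l (fun x y => psi K A (y * S (T x))) := by
  let g : A → (A →ₗ[K] K) := fun y => psi K A ∘ₗ LinearMap.mul K A y ∘ₗ S
  have h1 : T = sw K l (fun x y => (g y).smulRight (T x)) := by
    ext h
    conv_lhs => rw [← recon_right H h, map_sw]
    simp [sw, g]
  conv_lhs => rw [h1, map_sw]
  simp only [LinearMap.trace_smulRight]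
  simp [g]

theorem trace_sg_cL (H : Haar K l) (hs : ∀ x, sg K A (sg K A x) = x) (f : A →ₗ[K] K) :
    LinearMap.trace K A ((sg K A).toLinearMap ∘ₗ cL f) = f l * psi K A 1 := by
  rw [trace_formula H]
  have h1 : ∀ x y : A, psi K A (y * S (((sg K A).toLinearMap ∘ₗ cL f) x)) =
      sw K x (fun x1 x2 => f x1 * psi K A (y * S (sg K A x2))) := by
    intro x y
    simp only [comp_apply, cL_apply, map_sw, mul_sw]
    simp
  simp only [h1]
  rw [sw_coassoc (T := fun x1 x2 y => f x1 * psi K A (y * S (sg K A x2)))]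
  · have h2 : ∀ y : A, sw K y (fun y1 y2 => y2 * S (sg K A y1)) = ε y • 1 := by
      intro y
      apply S_inj H
      rw [map_sw]
      have : ∀ a b : A, S (b * S (sg K A a)) = a * S b := by
        intro a b
        rw [S_mul]
        congr 1
        exact hs a
      simp only [this]
      rw [sw_mul_antipode]; simp
    have h3 : ∀ x y : A, sw K y (fun y1 y2 => f x * psi K A (y2 * S (sg K A y1))) =
        ε y • (f x * psi K A 1) := by
      intro x y
      have := congrArg (fun t => f x * psi K A t) (h2 y)
      simp only [map_sw, mul_sw', map_smul] at this
      rw [this]; simp; ring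
    simp only [h3]
    exact sw_counit_right (f.smulRight (psi K A 1)) l
  · apply IsTri.mk <;> intros <;> simp [add_mul, mul_add] <;> ring

variable (K A) in
/-- the regular character -/
def chi : A →ₗ[K] K := LinearMap.trace K A ∘ₗ LinearMap.mul K A

theorem chi_apply (h : A) : chi K A h = LinearMap.trace K A (LinearMap.mul K A h) := rfl

theorem chi_l (H : Haar K l) : chi K A l = 1 := by
  have : LinearMap.mul K A l = (ε).smulRight l := by
    ext x; simp [H.right]
  rw [chi_apply, this, LinearMap.trace_smulRight, H.counit]

theorem chi_sg (hs : ∀ x, sg K A (sg K A x) = x) (h : A) : chi K A (sg K A h) = chi K A h := by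
  have h1 : LinearMap.mul K A (sg K A h) =
    ((sg K A).toLinearMap ∘ₗ LinearMap.mul K A h) ∘ₗ (sg K A).toLinearMap := by
    ext x; simp [hs]
  rw [chi_apply, h1]
  change LinearMap.trace K A (_ * _) = _
  rw [LinearMap.trace_mul_comm, chi_apply]
  congr 1
  ext x; simp [hs]

variable (K A) in
/-- the canonical map -/
def can : A ⊗[K] A →ₗ[K] A ⊗[K] A :=
  lift (LinearMap.mk₂ K (fun x y => comul (R := K) x * ((1 : A) ⊗ₜ[K] y))
    (by intros; simp [add_mul]) (by intros; simp)
    (by intros; simp [tmul_add, mul_add]) (by intros; simp))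

theorem can_tmul (x y : A) : can K A (x ⊗ₜ y) = comul (R := K) x * ((1 : A) ⊗ₜ[K] y) := by
  simp [can]

theorem can_surj : Function.Surjective (can K A) := by
  rw [← LinearMap.range_eq_top, eq_top_iff, ← TensorProduct.span_tmul_eq_top, Submodule.span_le]
  rintro _ ⟨x, y, rfl⟩
  refine ⟨sw K x (fun x1 x2 => x1 ⊗ₜ[K] (S x2 * y)), ?_⟩
  rw [map_sw]
  simp only [can_tmul]
  have := I5 (LinearMap.compr₂ (TensorProduct.mk K A A)
    (LinearMap.mulRight K ((1 : A) ⊗ₜ[K] y))) x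
  simp only [compr₂_apply, mk_apply, mulRight_apply, Algebra.TensorProduct.tmul_mul_tmul, one_mul,
    mul_one] at this
  rw [← this]
  congr 1; ext x y
  rw [← sw_tmul (K := K) x, sw_mul_right']
  simp [mul_assoc]

theorem chi_chi (h : A) : sw K h (fun x y => chi K A x * chi K A y) =
    Module.finrank K A * chi K A h := by
  let e := LinearEquiv.ofBijective (can K A)
    ⟨LinearMap.injective_iff_surjective.2 can_surj, can_surj⟩
  have h1 : sw K h (fun x y => chi K A x * chi K A y) =
      LinearMap.trace K (A ⊗[K] A) (LinearMap.mulLeft K (comul (R := K) h)) := by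
    have : LinearMap.mulLeft K (comul (R := K) h) =
      sw K h (fun x y => TensorProduct.map (LinearMap.mul K A x) (LinearMap.mul K A y)) := by
      rw [← sw_tmul (K := K) h]
      ext a b
      simp [sw, Finset.sum_mul]
    rw [this, map_sw]
    simp only [LinearMap.trace_tensorProduct', chi_apply]
  have h2 : LinearMap.mulLeft K (comul (R := K) h) =
      e.conj (TensorProduct.map (LinearMap.mul K A h) LinearMap.id) := by
    rw [LinearEquiv.conj_apply]
    have h3 : LinearMap.mulLeft K (comul (R := K) h) ∘ₗ e.toLinearMap =
        e.toLinearMap ∘ₗ TensorProduct.map (LinearMap.mul K A h) LinearMap.id := by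
      ext a b
      change comul (R := K) h * can K A (a ⊗ₜ b) = can K A ((h * a) ⊗ₜ b)
      rw [can_tmul, can_tmul, Bialgebra.comul_mul, mul_assoc]
    rw [← h3]
    ext x
    simp
  rw [h1, h2, LinearMap.trace_conj', LinearMap.trace_tensorProduct', LinearMap.trace_id, chi_apply,
    mul_comm]

theorem sg_eq_id [CharZero K] (H : Haar K l) (hp : psi K A 1 ≠ 0) (x : A) : sg K A x = x := by
  have hs := sg_sg H hp
  have hnt : (1 : A) ≠ 0 := fun h => by
    have := H.counit
    rw [← mul_one l, h, mul_zero, map_zero] at this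
    exact zero_ne_one this
  have : Nontrivial A := ⟨1, 0, hnt⟩
  set n := Module.finrank K A with hn
  have hnpos : 0 < n := Module.finrank_pos
  have hnK : (n : K) ≠ 0 := by exact_mod_cast hnpos.ne'
  let sgl : Module.End K A := (sg K A).toLinearMap
  have hsgl : sgl * sgl = 1 := by ext x; simp [sgl, hs]
  let Q : Module.End K A := (n : K)⁻¹ • cL (chi K A)
  let P : Module.End K A := (2 : K)⁻¹ • (1 + sgl)
  have hcc : (cL (chi K A) : Module.End K A) * cL (chi K A) = (n : K) • cL (chi K A) := by
    ext h
    rw [Module.End.mul_apply, cL_apply _ h, LinearMap.smul_apply, map_sw, cL_apply _ h]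
    have h1 : ∀ x y : A, cL (chi K A) (chi K A x • y) =
        sw K y (fun y1 y2 => chi K A x • chi K A y1 • y2) := by
      intro x y
      rw [map_smul, cL_apply, smul_sw]
    simp only [h1]
    rw [← sw_coassoc (T := fun x y1 y2 => chi K A x • chi K A y1 • y2)]
    · simp only [smul_smul, ← sw_smul_right, chi_chi, smul_sw, ← hn]
    · apply IsTri.mk <;> intros <;> simp [add_smul, smul_smul, mul_add, add_mul, mul_assoc] <;>
        ring_nf
  have hQ : Q * Q = Q := by
    simp only [Q, smul_mul_smul_comm, hcc, smul_smul]
    congr 1; field_simp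
  have hcomm : sgl * cL (chi K A) = cL (chi K A) * sgl := by
    ext h
    change sg K A (cL (chi K A) h) = cL (chi K A) (sg K A h)
    rw [cL_apply, cL_apply, sw_sg]
    · rw [← AlgHom.toLinearMap_apply, map_sw]
      simp [chi_sg hs]
    · apply IsBil.mk <;> intros <;> simp [add_smul, smul_smul, mul_comm]
  have hP : P * P = P := by
    simp only [P, smul_mul_smul_comm, add_mul, mul_add, hsgl, one_mul, mul_one]
    rw [show (1 + sgl + (sgl + 1) : Module.End K A) = (2 : K) • (1 + sgl) by rw [two_smul]; abel,
      smul_smul]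
    congr 1; norm_num
  have hQP : Q * P = P * Q := by
    simp only [Q, P, smul_mul_smul_comm, mul_add, add_mul, hcomm, mul_comm, one_mul, mul_one]
  have hR : (Q * P) * (Q * P) = Q * P := by
    rw [mul_assoc, ← mul_assoc P, ← hQP, mul_assoc Q P P, hP, ← mul_assoc, hQ]
  have tr : ∀ E : Module.End K A, E * E = E → LinearMap.trace K A E =
      (Module.finrank K (LinearMap.range E) : K) := fun E hE =>
    (LinearMap.IsIdempotentElem.isProj_range E hE).trace
  have hsP : sgl = (2 : K) • P - 1 := by
    simp [P, smul_smul]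
  have e1 : psi K A 1 = 2 * (Module.finrank K (LinearMap.range P) : K) - n := by
    have : psi K A 1 = LinearMap.trace K A sgl := by
      rw [psi_apply]; congr 1; ext x; simp [sgl]
    rw [this, hsP, map_sub, map_smul, tr P hP, LinearMap.trace_one]; rfl
  have e2 : psi K A 1 = n * (2 * (Module.finrank K (LinearMap.range (Q * P)) : K) -
      (Module.finrank K (LinearMap.range Q) : K)) := by
    have h1 := trace_sg_cL H hs (chi K A)
    rw [chi_l H, one_mul] at h1
    rw [← h1]
    have h2 : (sg K A).toLinearMap ∘ₗ cL (chi K A) = (n : K) • ((2 : K) • (Q * P) - Q) := by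
      change sgl * _ = _
      rw [hcomm, hsP]
      simp only [Q, mul_sub, mul_smul_comm, smul_mul_assoc, smul_sub, smul_smul, mul_one]
      congr 1
      · congr 1; field_simp
      · rw [mul_inv_cancel₀ hnK, one_smul]
    rw [h2, map_smul, map_sub, map_smul, tr _ hR, tr _ hQ]; rfl
  set r := Module.finrank K (LinearMap.range P) with hr
  set s := Module.finrank K (LinearMap.range (Q * P))
  set t := Module.finrank K (LinearMap.range Q)
  have e3 : (2 * r - n : ℤ) = n * (2 * s - t) := by
    have := e1.symm.trans e2
    exact_mod_cast this
  have e4 : (2 * r - n : ℤ) ≠ 0 := by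
    intro h
    apply hp
    rw [e1]
    exact_mod_cast h
  have hrn : r ≤ n := Submodule.finrank_le _
  have hr0 : r ≠ 0 := by
    intro h
    rw [hr, Submodule.finrank_eq_zero, LinearMap.range_eq_bot] at h
    have h2 : P 1 = 1 := by
      simp only [P, sgl, LinearMap.smul_apply, LinearMap.add_apply, Module.End.one_apply,
        AlgHom.toLinearMap_apply, map_one, ← two_smul K (1 : A), smul_smul]
      norm_num
    rw [h] at h2
    exact hnt h2.symm
  have hrn' : r = n := by
    have h1 : (2 * s - t : ℤ) ≠ 0 := fun h => e4 (by rw [e3, h, mul_zero])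
    generalize (2 * s - t : ℤ) = m at *
    rcases lt_or_gt_of_ne h1 with h | h
    · exfalso
      have : (n : ℤ) * m ≤ n * (-1) := by gcongr; omega
      omega
    · have : (n : ℤ) * 1 ≤ n * m := by gcongr; omega
      omega
  have htop : LinearMap.range P = ⊤ := Submodule.eq_top_of_finrank_eq hrn'
  have hx : P x = x := by
    obtain ⟨y, rfl⟩ := LinearMap.range_eq_top.1 htop x
    exact LinearMap.congr_fun hP y
  have : sgl x = x := by
    rw [hsP]; simp [hx, two_smul]
  exact this

end
end LR

namespace LR
open Coalgebra HopfAlgebra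

theorem antipode_antipode {F H : Type*} [Field F] [Ring H] [HopfAlgebra F H]
    [CharZero F] [FiniteDimensional F H] {l : H} (hl : Haar F l) (x : H) :
    antipode F (antipode F x) = x := by
  let K := AlgebraicClosure F
  have : CharZero K := charZero_of_injective_algebraMap (algebraMap F K).injective
  have hH : Haar K ((1 : K) ⊗ₜ[F] l) :=
    { left := fun h => by
        induction h using TensorProduct.induction_on with
        | zero => simp
        | tmul a b => 
          rw [Algebra.TensorProduct.tmul_mul_tmul, hl.left, TensorProduct.counit_tmul, smul_tmul',
            tmul_smul, smul_tmul']
          simp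
        | add a b ha hb => rw [add_mul, ha, hb, map_add, add_smul]
      right := fun h => by
        induction h using TensorProduct.induction_on with
        | zero => simp
        | tmul a b => 
          rw [Algebra.TensorProduct.tmul_mul_tmul, hl.right, TensorProduct.counit_tmul, smul_tmul',
            tmul_smul, smul_tmul']
          simp
        | add a b ha hb => rw [mul_add, ha, hb, map_add, add_smul]
      counit := by simp [hl.counit] }
  have h1 := sg_eq_id hH (psi_one_ne hH) ((1 : K) ⊗ₜ[F] x)
  rw [sg_apply] at h1
  have h2 : ∀ y : H, antipode K ((1 : K) ⊗ₜ[F] y) = (1 : K) ⊗ₜ[F] antipode F y := by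
    intro y
    simp [TensorProduct.antipode_def]
  rw [h2, h2] at h1
  exact Algebra.TensorProduct.includeRight_injective (algebraMap F K).injective h1

theorem adL_apply {F H : Type*} [Field F] [Ring H] [HopfAlgebra F H] (h k : H) :
    adL F H h k = sw F h (fun x y => x * k * antipode F y) := by
  rw [adL, comp_apply, ← sw_lin, sw, sw, LinearMap.sum_apply]
  simp [mul_assoc]

theorem adL_mul {F H : Type*} [Field F] [Ring H] [HopfAlgebra F H] (a b k : H) :
    adL F H (a * b) k = adL F H a (adL F H b k) := by
  rw [adL_apply, adL_apply, adL_apply, sw_mul]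
  · simp [mul_sw, sw_mul_right, S_mul, mul_assoc]
  · apply IsBil.mk <;> intros <;> simp [add_mul, mul_add]

theorem inv_of_trace {F H : Type*} [Field F] [Ring H] [HopfAlgebra F H]
    (hS : ∀ x : H, antipode F (antipode F x) = x) (α : Module.Dual F H)
    (hα : ∀ a b : H, α (a * b) = α (b * a)) (h : H) :
    rcoad F H α h = Coalgebra.counit (R := F) h • α := by
  ext k
  have h1 : sw F h (fun x y => antipode F y * x) = Coalgebra.counit (R := F) h • (1 : H) := by
    have := congrArg (antipode F) (sw_antipode_mul (K := F) h)
    rw [map_sw] at this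
    simpa [S_mul, hS] using this
  have h2 : ∀ x y, α (x * k * antipode F y) = α (antipode F y * x * k) := by
    intro x y; rw [hα, mul_assoc]
  rw [rcoad, comp_apply, adL_apply, map_sw]
  simp only [h2]
  rw [← map_sw, ← sw_mul_right, h1]; simp

theorem trace_of_inv {F H : Type*} [Field F] [Ring H] [HopfAlgebra F H]
    (hS : ∀ x : H, antipode F (antipode F x) = x) (α : Module.Dual F H)
    (hα : ∀ h, rcoad F H α h = Coalgebra.counit (R := F) h • α) (a b : H) :
    α (a * b) = α (b * a) := by
  have h1 : sw F a (fun x y => adL F H x (b * y)) = a * b := by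
    simp only [adL_apply]
    rw [sw_coassoc (T := fun x1 x2 y => x1 * (b * y) * antipode F x2)]
    · have h2 : ∀ y : H, sw F y (fun y1 y2 => y2 * antipode F y1) =
          Coalgebra.counit (R := F) y • (1 : H) := by
        intro y
        have := congrArg (antipode F) (sw_mul_antipode (K := F) y)
        rw [map_sw] at this
        simpa [S_mul, hS] using this
      have h3 : ∀ x y : H, sw F y (fun y1 y2 => x * (b * y2) * antipode F y1) =
          Coalgebra.counit (R := F) y • (x * b) := by
        intro x y
        have := congrArg (fun t => x * b * t) (h2 y)
        simpa [mul_sw, mul_assoc] using this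
      simp only [h3]
      exact sw_counit_right ((LinearMap.mul F H).flip b) a
    · apply IsTri.mk <;> intros <;> simp [add_mul, mul_add]
  rw [← h1, map_sw]
  have h4 : ∀ x y : H, α (adL F H x (b * y)) = Coalgebra.counit (R := F) x • α (b * y) :=
    fun x y => LinearMap.congr_fun (hα x) (b * y)
  simp only [h4]
  exact sw_counit_left (α ∘ₗ LinearMap.mul F H b) a

end LR

/-- Let `H` be a finite-dimensional semisimple Hopf algebra over a field of
characteristic zero with Haar integral `ℓ`.  The invariants of the right coadjoint action of
`H` on `H*` are exactly the character algebra
`C(H) = {α ∈ H* : Δ(α) = Δ^op(α)} = {α : ∀ a b, α(a*b) = α(b*a)}`, and the map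
`π_ad : α ↦ α ◁*_ad ℓ` is a projector onto `C(H)`. -/
theorem coadjoint_invariants_character_algebra
    [CharZero F] [FiniteDimensional F H] [IsSemisimpleRing H]
    (ℓ : H)
    (hL : ∀ h : H, h * ℓ = Coalgebra.counit (R := F) h • ℓ)
    (hR : ∀ h : H, ℓ * h = Coalgebra.counit (R := F) h • ℓ)
    (hc : Coalgebra.counit (R := F) ℓ = 1) :
    ({α : Module.Dual F H | ∀ h : H, rcoad F H α h = Coalgebra.counit (R := F) h • α}
        = {α : Module.Dual F H | ∀ a b : H, α (a * b) = α (b * a)}) ∧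
    (∀ α : Module.Dual F H, rcoad F H (rcoad F H α ℓ) ℓ = rcoad F H α ℓ) ∧
    (Set.range (fun α : Module.Dual F H => rcoad F H α ℓ)
        = {α : Module.Dual F H | ∀ a b : H, α (a * b) = α (b * a)}) := by
  have hS := LR.antipode_antipode (F := F) (l := ℓ) ⟨hL, hR, hc⟩
  have hinv : ∀ α h, rcoad F H (rcoad F H α ℓ) h =
      Coalgebra.counit (R := F) h • rcoad F H α ℓ := by
    intro α h
    ext k
    change α (adL F H ℓ (adL F H h k)) = Coalgebra.counit (R := F) h • α (adL F H ℓ k)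
    rw [← LR.adL_mul, hR]; simp
  refine ⟨?_, fun α => ?_, ?_⟩
  · ext α
    exact ⟨LR.trace_of_inv hS α, LR.inv_of_trace hS α⟩
  · rw [hinv, hc, one_smul]
  · ext α
    constructor
    · rintro ⟨β, rfl⟩
      exact LR.trace_of_inv hS _ (hinv β)
    · intro hα
      refine ⟨α, ?_⟩
      change rcoad F H α ℓ = α
      rw [LR.inv_of_trace hS α hα, hc, one_smul]

end
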